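/- arXiv:2308.06364 — 3 statements merged into one kernel-verified Lean document; each statement's English description precedes it below -/
import Mathlib

section
/- Let N be a positive integer with base-φ representation given by the finite set S of integers (so S contains no two consecutive integers and N = Σ_{i∈S} φ^i). Assume S contains at least one positive element, and let i be the smallest positive element of S. If i is even, then N = Σ_{k∈S, k<0} (−1)^{|k|} L_{|k|} + d_0 (equivalently, N = Σ_{k∈S, k<0} L_k + d_0, with Lucas numbers extended to negative indices by L_{−n} = (−1)^n L_n). -/
/-!
Write `A`, `B` for the sums of `φ^k` over the positive and the negative `k ∈ S`, and `A'`, `B'` for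
the sums of the conjugates `φ̄^k`. As `N` is rational, conjugation in `ℤ[φ]` gives
`A + d₀ + B = N = A' + d₀ + B'` (`ConjPair.eq_of_eq_int`), while the right-hand side of the claim is
`B + B' + d₀`. So the claim is `A' - B = 0`.

Now `A' - B` is an element of `ℤ[φ]` with conjugate `A - B'`, and the two are equal, so it is an
integer (`ConjPair.exists_int`). It lies strictly between `-1` and `1`: since `S` has no two
consecutive elements, `0 ≤ B < 1` by comparison with `φ⁻¹ + φ⁻³ + ⋯ = 1`
(`sum_lt_of_nonconsecutive`). Since `i` is even, `A'` is `φ^{-i}` plus terms of indices at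
least `i + 2`, which total less than `φ^{-(i+1)}` in absolute value, so `0 < A' < φ^{-(i-1)} < 1`.
-/

/-- The golden ratio φ = (1+√5)/2. -/
noncomputable def goldenPhi : ℝ := (1 + Real.sqrt 5) / 2

/-- The algebraic conjugate φ̄ = (1−√5)/2. -/
noncomputable def goldenPhiBar : ℝ := (1 - Real.sqrt 5) / 2

/-- Lucas numbers extended to all integer indices: L n = φ^n + φ̄^n. -/
noncomputable def LucasR (n : ℤ) : ℝ := goldenPhi ^ n + goldenPhiBar ^ n

lemma goldenPhi_add_bar : goldenPhi + goldenPhiBar = 1 := by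
  unfold goldenPhi goldenPhiBar; ring

lemma goldenPhi_mul_bar : goldenPhi * goldenPhiBar = -1 := by
  unfold goldenPhi goldenPhiBar
  have := Real.sq_sqrt (show (0 : ℝ) ≤ 5 by norm_num)
  nlinarith

lemma one_lt_goldenPhi : 1 < goldenPhi := by
  unfold goldenPhi
  have : 1 < Real.sqrt 5 := by
    rw [Real.lt_sqrt] <;> norm_num
  linarith

lemma goldenPhi_inv : goldenPhi⁻¹ = -goldenPhiBar := by
  have := one_lt_goldenPhi
  apply inv_eq_of_mul_eq_one_right
  linarith [goldenPhi_mul_bar]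

lemma goldenPhiBar_neg : goldenPhiBar < 0 := by
  have := one_lt_goldenPhi
  linarith [goldenPhi_add_bar]

lemma goldenPhiBar_inv : goldenPhiBar⁻¹ = -goldenPhi := by
  rw [inv_eq_iff_eq_inv, inv_neg, goldenPhi_inv, neg_neg]

lemma goldenPhi_sq : goldenPhi * goldenPhi = goldenPhi + 1 := by
  linear_combination goldenPhi * goldenPhi_add_bar - goldenPhi_mul_bar

lemma goldenPhiBar_sq : goldenPhiBar * goldenPhiBar = goldenPhiBar + 1 := by
  linear_combination goldenPhiBar * goldenPhi_add_bar - goldenPhi_mul_bar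

lemma goldenPhi_irrational : Irrational goldenPhi := Real.goldenRatio_irrational

/-- `x` is an element of `ℤ[φ] ⊆ ℝ` and `y` is its algebraic conjugate. -/
def ConjPair (x y : ℝ) : Prop :=
  ∃ a b : ℤ, x = a + b * goldenPhi ∧ y = a + b * goldenPhiBar

namespace ConjPair

lemma zero : ConjPair 0 0 := ⟨0, 0, by simp, by simp⟩

lemma one : ConjPair 1 1 := ⟨1, 0, by simp, by simp⟩

lemma add {x y x' y' : ℝ} (h : ConjPair x y) (h' : ConjPair x' y') :
    ConjPair (x + x') (y + y') := by
  obtain ⟨a, b, rfl, rfl⟩ := h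
  obtain ⟨c, d, rfl, rfl⟩ := h'
  exact ⟨a + c, b + d, by push_cast; ring, by push_cast; ring⟩

lemma neg {x y : ℝ} (h : ConjPair x y) : ConjPair (-x) (-y) := by
  obtain ⟨a, b, rfl, rfl⟩ := h
  exact ⟨-a, -b, by push_cast; ring, by push_cast; ring⟩

lemma mul {x y x' y' : ℝ} (h : ConjPair x y) (h' : ConjPair x' y') :
    ConjPair (x * x') (y * y') := by
  obtain ⟨a, b, rfl, rfl⟩ := h
  obtain ⟨c, d, rfl, rfl⟩ := h'
  refine ⟨a * c + b * d, a * d + b * c + b * d, ?_, ?_⟩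
  · push_cast
    linear_combination (b * d : ℝ) * goldenPhi_sq
  · push_cast
    linear_combination (b * d : ℝ) * goldenPhiBar_sq

lemma swap {x y : ℝ} (h : ConjPair x y) : ConjPair y x := by
  obtain ⟨a, b, rfl, rfl⟩ := h
  refine ⟨a + b, -b, ?_, ?_⟩ <;> push_cast <;> linear_combination (b : ℝ) * goldenPhi_add_bar

lemma pow {x y : ℝ} (h : ConjPair x y) (n : ℕ) : ConjPair (x ^ n) (y ^ n) := by
  induction n with
  | zero => simpa using one
  | succ n ih => simpa only [pow_succ] using ih.mul h

lemma phi : ConjPair goldenPhi goldenPhiBar := ⟨0, 1, by simp, by simp⟩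

lemma phi_zpow (k : ℤ) : ConjPair (goldenPhi ^ k) (goldenPhiBar ^ k) := by
  obtain ⟨n, rfl | rfl⟩ := k.eq_nat_or_neg
  · simpa using phi.pow n
  · simpa only [zpow_neg, zpow_natCast, ← inv_pow, goldenPhi_inv, goldenPhiBar_inv]
      using phi.swap.neg.pow n

lemma sum {T : Finset ℤ} {f g : ℤ → ℝ} (h : ∀ k, ConjPair (f k) (g k)) :
    ConjPair (∑ k ∈ T, f k) (∑ k ∈ T, g k) := by
  induction T using Finset.induction_on with
  | empty => simpa using zero
  | insert a s ha ih => simpa only [Finset.sum_insert ha] using (h a).add ih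

lemma eq_of_eq_int {x y : ℝ} (h : ConjPair x y) {n : ℤ} (hx : x = n) : y = x := by
  obtain ⟨a, b, rfl, rfl⟩ := h
  have hb : b = 0 := by
    by_contra hb
    have := (goldenPhi_irrational.intCast_mul hb).intCast_add a
    exact this.ne_int n hx
  simp [hb]

/-- An element of `ℤ[φ]` equal to its conjugate is a rational integer. -/
lemma exists_int {x : ℝ} (h : ConjPair x x) : ∃ n : ℤ, x = n := by
  obtain ⟨a, b, hx, hx'⟩ := h
  have hb : (b : ℝ) * (goldenPhi - goldenPhiBar) = 0 := by linarith
  have : goldenPhi - goldenPhiBar ≠ 0 := by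
    have : 0 < goldenPhi - goldenPhiBar := by linarith [one_lt_goldenPhi, goldenPhiBar_neg]
    exact this.ne'
  have hb0 : (b : ℝ) = 0 := by simpa [this] using hb
  exact ⟨a, by simp [hx, hb0]⟩

end ConjPair

/-- A sum of powers of `r = φ⁻¹` with non-consecutive exponents at least `m` is below
`r^m + r^(m+2) + ⋯ = r^(m-1)`. -/
lemma sum_lt_of_nonconsecutive (T : Finset ℤ) : ∀ m : ℤ, (∀ k ∈ T, k + 1 ∉ T) →
    (∀ k ∈ T, m ≤ k) → ∑ k ∈ T, (goldenPhi⁻¹) ^ k < (goldenPhi⁻¹) ^ (m - 1) := by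
  have hφ := one_lt_goldenPhi
  have hr0 : 0 < goldenPhi⁻¹ := by positivity
  have hr1 : goldenPhi⁻¹ < 1 := inv_lt_one_of_one_lt₀ hφ
  have hrsq : goldenPhi⁻¹ * goldenPhi⁻¹ = 1 - goldenPhi⁻¹ := by
    rw [goldenPhi_inv]; linarith [goldenPhiBar_sq]
  induction T using Finset.strongInduction with
  | H T ih =>
    intro m hnc hm
    rcases T.eq_empty_or_nonempty with rfl | hT
    · simp only [Finset.sum_empty]; positivity
    · -- Split off the least exponent `a`; the others are at least `a + 2`.
      set a := T.min' hT with ha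
      have haT : a ∈ T := T.min'_mem hT
      have h2 : ∀ k ∈ T.erase a, a + 2 ≤ k := by
        intro k hk
        obtain ⟨hne, hkT⟩ := Finset.mem_erase.1 hk
        have h1 : a ≤ k := T.min'_le k hkT
        have h3 : k ≠ a + 1 := fun h => hnc a haT (h ▸ hkT)
        omega
      have := ih (T.erase a) (Finset.erase_ssubset haT) (a + 2)
        (fun k hk h => hnc k (Finset.mem_of_mem_erase hk) (Finset.mem_of_mem_erase h)) h2
      rw [← Finset.add_sum_erase T _ haT]
      have e1 : (goldenPhi⁻¹) ^ a = (goldenPhi⁻¹) ^ (a - 1) * goldenPhi⁻¹ := by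
        rw [← zpow_add_one₀ hr0.ne']; congr 1; ring
      have e2 : (goldenPhi⁻¹) ^ (a + 2 - 1)
          = (goldenPhi⁻¹) ^ (a - 1) * (goldenPhi⁻¹ * goldenPhi⁻¹) := by
        rw [← mul_assoc, ← zpow_add_one₀ hr0.ne', ← zpow_add_one₀ hr0.ne']; congr 1; ring
      have e3 : (goldenPhi⁻¹) ^ (a - 1) ≤ (goldenPhi⁻¹) ^ (m - 1) :=
        zpow_le_zpow_right_of_le_one₀ hr0 hr1.le (by linarith [hm a haT])
      rw [e2, hrsq] at this
      rw [e1]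
      linarith

lemma abs_goldenPhiBar_zpow (k : ℤ) : |goldenPhiBar ^ k| = (goldenPhi⁻¹) ^ k := by
  rw [abs_zpow, abs_of_neg goldenPhiBar_neg, goldenPhi_inv]

lemma lucas_of_neg {k : ℤ} (hk : k < 0) :
    (-1 : ℝ) ^ (k.natAbs) * LucasR (k.natAbs) = goldenPhi ^ k + goldenPhiBar ^ k := by
  have h : k = -(k.natAbs : ℤ) := by omega
  generalize k.natAbs = n at h
  subst h
  simp only [LucasR, zpow_neg, zpow_natCast, ← inv_pow, goldenPhi_inv, goldenPhiBar_inv]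
  rw [mul_add, ← mul_pow, ← mul_pow]
  simp only [neg_one_mul]
  ring

/-- The sum over `S` split by the sign of the index. -/
lemma sum_split (S : Finset ℤ) (f : ℤ → ℝ) (h0 : f 0 = 1) :
    ∑ k ∈ S, f k = ∑ k ∈ S with 0 < k, f k + ∑ k ∈ S with k < 0, f k
      + (if (0 : ℤ) ∈ S then 1 else 0) := by
  have e : (if (0 : ℤ) ∈ S then (1 : ℝ) else 0) = ∑ k ∈ S, if k = 0 then f k else 0 := by
    rw [Finset.sum_ite_eq' S 0 f, h0]
  rw [e, Finset.sum_filter, Finset.sum_filter, ← Finset.sum_add_distrib, ← Finset.sum_add_distrib]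
  refine Finset.sum_congr rfl fun k _ => ?_
  rcases lt_trichotomy k 0 with h | h | h
  · simp [h, h.ne, h.not_gt]
  · simp [h]
  · simp [h, h.ne', h.not_gt]

lemma sum_neg_lt_one (S : Finset ℤ) (hnc : ∀ k ∈ S, k + 1 ∉ S) :
    ∑ k ∈ S with k < 0, goldenPhi ^ k < 1 := by
  have key := sum_lt_of_nonconsecutive ((S.filter (fun k => k < 0)).image (fun k => -k)) 1
    (by
      intro k hk hk1
      simp only [Finset.mem_image, Finset.mem_filter] at hk hk1
      obtain ⟨a, ⟨ha, -⟩, rfl⟩ := hk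
      obtain ⟨b, ⟨hb, -⟩, hab⟩ := hk1
      exact hnc b hb (by rwa [show b + 1 = a by omega]))
    (by
      intro k hk
      simp only [Finset.mem_image, Finset.mem_filter] at hk
      obtain ⟨a, ⟨-, ha⟩, rfl⟩ := hk
      omega)
  rw [Finset.sum_image (fun a _ b _ h => neg_injective h)] at key
  simpa using key

/-- The tail beyond the least positive index `i`, even, cannot cancel the leading term `φ̄^i > 0`. -/
lemma sum_pos_bar_bounds (S : Finset ℤ) (hnc : ∀ k ∈ S, k + 1 ∉ S) (i : ℤ) (hiS : i ∈ S)
    (hipos : 0 < i) (hmin : ∀ j ∈ S, 0 < j → i ≤ j) (heven : Even i) :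
    0 < ∑ k ∈ S with 0 < k, goldenPhiBar ^ k ∧ ∑ k ∈ S with 0 < k, goldenPhiBar ^ k < 1 := by
  have hφ := one_lt_goldenPhi
  have hr0 : 0 < goldenPhi⁻¹ := by positivity
  have hr1 : goldenPhi⁻¹ < 1 := inv_lt_one_of_one_lt₀ hφ
  have hrsq : goldenPhi⁻¹ * goldenPhi⁻¹ = 1 - goldenPhi⁻¹ := by
    rw [goldenPhi_inv]; linarith [goldenPhiBar_sq]
  have hiP : i ∈ S.filter (fun k => 0 < k) := by simp [hiS, hipos]
  rw [← Finset.add_sum_erase _ _ hiP]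
  set T := (S.filter (fun k => 0 < k)).erase i with hT
  have hmem : ∀ k ∈ T, k ∈ S ∧ 0 < k ∧ k ≠ i := by
    intro k hk
    simp only [hT, Finset.mem_erase, Finset.mem_filter] at hk
    tauto
  have hlt := sum_lt_of_nonconsecutive T (i + 2)
    (fun k hk h => hnc k (hmem k hk).1 (hmem _ h).1)
    (by
      intro k hk
      obtain ⟨hkS, hk0, hki⟩ := hmem k hk
      have h1 := hmin k hkS hk0
      have h2 : k ≠ i + 1 := fun h => hnc i hiS (h ▸ hkS)
      omega)
  have habs : |∑ k ∈ T, goldenPhiBar ^ k| ≤ ∑ k ∈ T, (goldenPhi⁻¹) ^ k := by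
    simpa only [abs_goldenPhiBar_zpow] using
      Finset.abs_sum_le_sum_abs (fun k : ℤ => goldenPhiBar ^ k) T
  have hi : goldenPhiBar ^ i = (goldenPhi⁻¹) ^ i := by
    rw [goldenPhi_inv, heven.neg_zpow]
  have e1 : (goldenPhi⁻¹) ^ i = (goldenPhi⁻¹) ^ (i - 1) * goldenPhi⁻¹ := by
    rw [← zpow_add_one₀ hr0.ne']; congr 1; ring
  have e2 : (goldenPhi⁻¹) ^ (i + 2 - 1)
      = (goldenPhi⁻¹) ^ (i - 1) * (goldenPhi⁻¹ * goldenPhi⁻¹) := by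
    rw [← mul_assoc, ← zpow_add_one₀ hr0.ne', ← zpow_add_one₀ hr0.ne']; congr 1; ring
  have e3 : (goldenPhi⁻¹) ^ (i + 2 - 1) < (goldenPhi⁻¹) ^ i :=
    zpow_lt_zpow_right_of_lt_one₀ hr0 hr1 (by omega)
  have e4 : (goldenPhi⁻¹) ^ (i - 1) ≤ 1 := by
    simpa using zpow_le_zpow_right_of_le_one₀ hr0 hr1.le (show 0 ≤ i - 1 by omega)
  obtain ⟨hl, hu⟩ := abs_le.1 habs
  constructor
  · linarith
  · rw [hrsq] at e2
    linarith

/-- Theorem 2 (even case): if the smallest positive index `i` in the base-φ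
representation `S` of `N` is even, then `N = Σ_{k∈S, k<0} (−1)^{|k|} L_{|k|} + d_0`. -/
theorem stmt_3 (N : ℕ) (hN : 0 < N) (S : Finset ℤ)
    (hnc : ∀ k ∈ S, k + 1 ∉ S)
    (hrep : (N : ℝ) = ∑ k ∈ S, goldenPhi ^ k)
    (i : ℤ) (hiS : i ∈ S) (hipos : 0 < i)
    (hmin : ∀ j ∈ S, 0 < j → i ≤ j)
    (heven : Even i) :
    (N : ℝ) = (∑ k ∈ S.filter (fun k => k < 0),
        (-1 : ℝ) ^ (k.natAbs) * LucasR (k.natAbs)) +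
      (if (0 : ℤ) ∈ S then 1 else 0) := by
  have hconj : ∑ k ∈ S, goldenPhiBar ^ k = ∑ k ∈ S, goldenPhi ^ k :=
    (ConjPair.sum ConjPair.phi_zpow).eq_of_eq_int (n := N) (by rw [← hrep]; simp)
  rw [Finset.sum_congr rfl fun k hk => lucas_of_neg (Finset.mem_filter.1 hk).2,
    Finset.sum_add_distrib]
  have hs := sum_split S (fun k => goldenPhi ^ k) (by simp)
  have hs' := sum_split S (fun k => goldenPhiBar ^ k) (by simp)
  have hB := sum_neg_lt_one S hnc
  have hB0 : 0 ≤ ∑ k ∈ S with k < 0, goldenPhi ^ k :=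
    Finset.sum_nonneg fun k _ => zpow_nonneg (by linarith [one_lt_goldenPhi]) k
  obtain ⟨hA0, hA1⟩ := sum_pos_bar_bounds S hnc i hiS hipos hmin heven
  have hpair : ConjPair
      (∑ k ∈ S with 0 < k, goldenPhi ^ k + -∑ k ∈ S with k < 0, goldenPhiBar ^ k)
      (∑ k ∈ S with 0 < k, goldenPhiBar ^ k + -∑ k ∈ S with k < 0, goldenPhi ^ k) :=
    (ConjPair.sum ConjPair.phi_zpow).add (ConjPair.sum ConjPair.phi_zpow).swap.neg
  have hself : ∑ k ∈ S with 0 < k, goldenPhi ^ k + -∑ k ∈ S with k < 0, goldenPhiBar ^ k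
      = ∑ k ∈ S with 0 < k, goldenPhiBar ^ k + -∑ k ∈ S with k < 0, goldenPhi ^ k := by
    linarith
  rw [hself] at hpair
  obtain ⟨n, hn⟩ := hpair.exists_int
  have h1 : (n : ℝ) < 1 := by linarith
  have h2 : (-1 : ℝ) < n := by linarith
  have hn0 : n = 0 := by
    have h1' : n < 1 := by exact_mod_cast h1
    have h2' : -1 < n := by exact_mod_cast h2
    omega
  rw [hn0, Int.cast_zero] at hn
  linarith
end

section
/- Let N be a positive integer with base-φ representation given by the finite set S of integers (so S contains no two consecutive integers and N = Σ_{i∈S} φ^i). Then 2N = Σ_{k∈S, k>0} L_k + 2·d_0 + Σ_{k∈S, k<0} (−1)^{|k|} L_{|k|}; equivalently, 2N = Σ_{k∈S} L_k, where the Lucas numbers are extended to negative indices by L_{−n} = (−1)^n L_n and L_0 = 2. -/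
lemma goldenPhi_eq : goldenPhi = Real.goldenRatio := rfl

lemma goldenPhiBar_eq : goldenPhiBar = Real.goldenConj := rfl

/-- Conjugate powers of `φ` and `φ̄` have the same integer coordinates with respect to
`1, φ` and `1, φ̄`. -/
lemma exists_zpow_coords (k : ℤ) : ∃ a b : ℤ,
    goldenPhi ^ k = a + b * goldenPhi ∧ goldenPhiBar ^ k = a + b * goldenPhiBar := by
  rw [goldenPhi_eq, goldenPhiBar_eq]
  have hp := Real.goldenRatio_sq
  have hq := Real.goldenConj_sq
  induction k with
  | zero => exact ⟨1, 0, by simp, by simp⟩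
  | succ n ih =>
    obtain ⟨a, b, h1, h2⟩ := ih
    refine ⟨b, a + b, ?_, ?_⟩
    · rw [zpow_add_one₀ Real.goldenRatio_ne_zero, h1]
      push_cast
      linear_combination (b : ℝ) * hp
    · rw [zpow_add_one₀ Real.goldenConj_ne_zero, h2]
      push_cast
      linear_combination (b : ℝ) * hq
  | pred n ih =>
    obtain ⟨a, b, h1, h2⟩ := ih
    -- Both roots of `x² = x + 1` satisfy `x⁻¹ = x - 1`.
    have hs := Real.goldenRatio_add_goldenConj
    refine ⟨b - a, a, ?_, ?_⟩
    · rw [zpow_sub_one₀ Real.goldenRatio_ne_zero, h1, Real.inv_goldenRatio]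
      push_cast
      linear_combination (b : ℝ) * hp - (a + b * Real.goldenRatio) * hs
    · rw [zpow_sub_one₀ Real.goldenConj_ne_zero, h2, Real.inv_goldenConj]
      push_cast
      linear_combination (b : ℝ) * hq - (a + b * Real.goldenConj) * hs

/-- Conjugating a representation of a natural number as a sum of powers of `φ`. -/
lemma sum_goldenPhiBar (N : ℕ) (S : Finset ℤ) (hrep : (N : ℝ) = ∑ k ∈ S, goldenPhi ^ k) :
    (N : ℝ) = ∑ k ∈ S, goldenPhiBar ^ k := by
  choose a b h1 h2 using exists_zpow_coords
  have hsum : (N : ℝ) = (∑ k ∈ S, a k : ℤ) + (∑ k ∈ S, b k : ℤ) * goldenPhi := by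
    rw [hrep, Finset.sum_congr rfl fun k _ => h1 k, Finset.sum_add_distrib, ← Finset.sum_mul]
    push_cast
    rfl
  have hconj : ∑ k ∈ S, goldenPhiBar ^ k
      = (∑ k ∈ S, a k : ℤ) + (∑ k ∈ S, b k : ℤ) * goldenPhiBar := by
    rw [Finset.sum_congr rfl fun k _ => h2 k, Finset.sum_add_distrib, ← Finset.sum_mul]
    push_cast
    rfl
  have hB : ∑ k ∈ S, b k = 0 := by
    by_contra hne
    refine (Real.goldenRatio_irrational.intCast_mul hne).ne_int (N - ∑ k ∈ S, a k) ?_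
    rw [← goldenPhi_eq, Int.cast_sub, Int.cast_natCast]
    linarith
  rw [hconj, hsum, hB]
  simp

lemma LucasR_neg (n : ℕ) : LucasR (-(n : ℤ)) = (-1) ^ n * LucasR n := by
  simp only [LucasR, goldenPhi_eq, goldenPhiBar_eq, zpow_neg, zpow_natCast, ← inv_pow,
    Real.inv_goldenRatio, Real.inv_goldenConj]
  rw [neg_pow Real.goldenConj, neg_pow Real.goldenRatio]
  ring

/-- Corollary 1: for `N` with base-φ representation `S`,
`2N = Σ_{k∈S, k>0} L_k + 2·d_0 + Σ_{k∈S, k<0} (−1)^{|k|} L_{|k|}`. -/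
theorem stmt_11 (N : ℕ) (hN : 0 < N) (S : Finset ℤ)
    (hnc : ∀ k ∈ S, k + 1 ∉ S)
    (hrep : (N : ℝ) = ∑ k ∈ S, goldenPhi ^ k) :
    2 * (N : ℝ) = (∑ k ∈ S.filter (fun k => 0 < k), LucasR k) +
      2 * (if (0 : ℤ) ∈ S then 1 else 0) +
      (∑ k ∈ S.filter (fun k => k < 0),
        (-1 : ℝ) ^ (k.natAbs) * LucasR (k.natAbs)) := by
  have hL : 2 * (N : ℝ) = ∑ k ∈ S, LucasR k := by
    simp only [LucasR, Finset.sum_add_distrib]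
    rw [← hrep, ← sum_goldenPhiBar N S hrep]
    ring
  have hzero : (2 : ℝ) * (if (0 : ℤ) ∈ S then 1 else 0)
      = ∑ k ∈ S, if k = 0 then LucasR k else 0 := by
    rw [Finset.sum_ite_eq']
    split_ifs <;> norm_num [LucasR]
  rw [hL, hzero, Finset.sum_filter, Finset.sum_filter, ← Finset.sum_add_distrib,
    ← Finset.sum_add_distrib]
  refine Finset.sum_congr rfl fun k _ => ?_
  rcases lt_trichotomy k 0 with hk | hk | hk
  · have hk' : k = -(k.natAbs : ℤ) := by omega
    rw [← LucasR_neg, ← hk']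
    simp [hk, hk.ne, hk.le]
  · simp [hk]
  · simp [hk, hk.ne', hk.le]
end

section
/- Let N be a positive integer and let i_1, i_2, …, i_m be integers with N = φ^{i_1} + φ^{i_2} + ⋯ + φ^{i_m}. Then the three conditions are equivalent: (1) for every integer n, N·F_n = F_{n+i_1} + ⋯ + F_{n+i_m}; (2) N = φ^{i_1} + ⋯ + φ^{i_m}; (3) for every integer n, N·L_n = L_{n+i_1} + ⋯ + L_{n+i_m}. That is, for any positive integer N and any integers i_1, …, i_m, conditions (1), (2), and (3) are pairwise equivalent. -/
/-- Fibonacci numbers extended to all integer indices: F n = (φ^n − φ̄^n)/√5. -/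
noncomputable def FibR (n : ℤ) : ℝ := (goldenPhi ^ n - goldenPhiBar ^ n) / Real.sqrt 5

lemma phi_sq : goldenPhi ^ 2 = goldenPhi + 1 := Real.goldenRatio_sq

lemma phiBar_sq : goldenPhiBar ^ 2 = goldenPhiBar + 1 := Real.goldenConj_sq

lemma phi_ne_zero : goldenPhi ≠ 0 := Real.goldenRatio_ne_zero

lemma phiBar_ne_zero : goldenPhiBar ≠ 0 := Real.goldenConj_ne_zero

lemma phi_sub_phiBar : goldenPhi - goldenPhiBar = Real.sqrt 5 :=
  Real.goldenRatio_sub_goldenConj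

lemma sqrt_five_ne_zero : Real.sqrt 5 ≠ 0 := by positivity

/-- Both roots of `x² = x + 1` have the same integer coordinates for their `j`-th powers. -/
lemma exists_int_zpow (j : ℤ) : ∃ a b : ℤ,
    goldenPhi ^ j = a + b * goldenPhi ∧ goldenPhiBar ^ j = a + b * goldenPhiBar := by
  -- Multiplication by `x` sends `(a, b)` to `(b, a + b)`; its inverse, multiplication by
  -- `x⁻¹ = x - 1`, sends `(a, b)` to `(b - a, a)`.
  have inv_eq : ∀ x : ℝ, x ≠ 0 → x ^ 2 = x + 1 → x⁻¹ = x - 1 := by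
    intro x hx h
    field_simp
    linarith
  induction j using Int.induction_on with
  | zero => exact ⟨1, 0, by simp, by simp⟩
  | succ j ih =>
    obtain ⟨a, b, h₁, h₂⟩ := ih
    refine ⟨b, a + b, ?_, ?_⟩
    · rw [zpow_add_one₀ phi_ne_zero, h₁]
      push_cast
      linear_combination (b : ℝ) * phi_sq
    · rw [zpow_add_one₀ phiBar_ne_zero, h₂]
      push_cast
      linear_combination (b : ℝ) * phiBar_sq
  | pred j ih =>
    obtain ⟨a, b, h₁, h₂⟩ := ih
    refine ⟨b - a, a, ?_, ?_⟩
    · rw [zpow_sub_one₀ phi_ne_zero, h₁, inv_eq _ phi_ne_zero phi_sq]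
      push_cast
      linear_combination (b : ℝ) * phi_sq
    · rw [zpow_sub_one₀ phiBar_ne_zero, h₂, inv_eq _ phiBar_ne_zero phiBar_sq]
      push_cast
      linear_combination (b : ℝ) * phiBar_sq

/-- Galois conjugation applied to a representation of an integer as a sum of powers of `φ`. -/
lemma sum_phiBar_of_sum_phi (N m : ℕ) (i : Fin m → ℤ)
    (h : (N : ℝ) = ∑ k, goldenPhi ^ (i k)) : (N : ℝ) = ∑ k, goldenPhiBar ^ (i k) := by
  choose a b h₁ h₂ using fun k => exists_int_zpow (i k)
  simp only [h₁, Finset.sum_add_distrib, ← Finset.sum_mul, ← Int.cast_sum] at h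
  simp only [h₂, Finset.sum_add_distrib, ← Finset.sum_mul, ← Int.cast_sum]
  have hb : ∑ k, b k = 0 := by
    by_contra hb
    have irr : Irrational (((∑ k, b k : ℤ) : ℝ) * goldenPhi) :=
      Real.goldenRatio_irrational.intCast_mul hb
    apply irr.ne_int ((N : ℤ) - ∑ k, a k)
    rw [Int.cast_sub, Int.cast_natCast]
    linarith
  rw [hb] at h ⊢
  simpa using h

lemma sum_FibR (m : ℕ) (i : Fin m → ℤ) (n : ℤ) :
    ∑ k, FibR (n + i k) = (goldenPhi ^ n * ∑ k, goldenPhi ^ (i k) -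
      goldenPhiBar ^ n * ∑ k, goldenPhiBar ^ (i k)) / Real.sqrt 5 := by
  simp only [FibR, zpow_add₀ phi_ne_zero, zpow_add₀ phiBar_ne_zero, Finset.mul_sum,
    ← Finset.sum_sub_distrib, Finset.sum_div]

lemma sum_LucasR (m : ℕ) (i : Fin m → ℤ) (n : ℤ) :
    ∑ k, LucasR (n + i k) = goldenPhi ^ n * ∑ k, goldenPhi ^ (i k) +
      goldenPhiBar ^ n * ∑ k, goldenPhiBar ^ (i k) := by
  simp only [LucasR, zpow_add₀ phi_ne_zero, zpow_add₀ phiBar_ne_zero, Finset.mul_sum,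
    ← Finset.sum_add_distrib]

/-- Proposition 1: for a positive integer `N` and integers `i_1, …, i_m`, the
conditions (1) `N·F_n = F_{n+i_1} + ⋯ + F_{n+i_m}` for all `n`,
(2) `N = φ^{i_1} + ⋯ + φ^{i_m}`, and
(3) `N·L_n = L_{n+i_1} + ⋯ + L_{n+i_m}` for all `n`, are pairwise equivalent. -/
theorem stmt_15 (N : ℕ) (hN : 0 < N) (m : ℕ) (i : Fin m → ℤ) :
    ((∀ n : ℤ, (N : ℝ) * FibR n = ∑ k, FibR (n + i k)) ↔
      ((N : ℝ) = ∑ k, goldenPhi ^ (i k))) ∧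
    (((N : ℝ) = ∑ k, goldenPhi ^ (i k)) ↔
      (∀ n : ℤ, (N : ℝ) * LucasR n = ∑ k, LucasR (n + i k))) ∧
    ((∀ n : ℤ, (N : ℝ) * FibR n = ∑ k, FibR (n + i k)) ↔
      (∀ n : ℤ, (N : ℝ) * LucasR n = ∑ k, LucasR (n + i k))) := by
  have fib_iff : (∀ n : ℤ, (N : ℝ) * FibR n = ∑ k, FibR (n + i k)) ↔
      ((N : ℝ) = ∑ k, goldenPhi ^ (i k)) := by
    constructor
    · intro h
      have h₀ := h 0
      have h₁ := h 1
      rw [sum_FibR, FibR, ← mul_div_assoc, div_left_inj' sqrt_five_ne_zero] at h₀ h₁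
      simp only [zpow_zero, zpow_one] at h₀ h₁
      -- Eliminating the conjugate sum leaves the factor `φ - φ̄ = √5`.
      apply mul_left_cancel₀ sqrt_five_ne_zero
      rw [← phi_sub_phiBar]
      linear_combination h₁ - goldenPhiBar * h₀
    · intro h n
      rw [sum_FibR, ← h, ← sum_phiBar_of_sum_phi N m i h, FibR]
      ring
  have lucas_iff : ((N : ℝ) = ∑ k, goldenPhi ^ (i k)) ↔
      (∀ n : ℤ, (N : ℝ) * LucasR n = ∑ k, LucasR (n + i k)) := by
    constructor
    · intro h n
      rw [sum_LucasR, ← h, ← sum_phiBar_of_sum_phi N m i h, LucasR]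
      ring
    · intro h
      have h₀ := h 0
      have h₁ := h 1
      rw [sum_LucasR, LucasR] at h₀ h₁
      simp only [zpow_zero, zpow_one] at h₀ h₁
      apply mul_left_cancel₀ sqrt_five_ne_zero
      rw [← phi_sub_phiBar]
      linear_combination h₁ - goldenPhiBar * h₀
  exact ⟨fib_iff, lucas_iff, fib_iff.trans lucas_iff⟩
end
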